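/- Structural congruence is sound for thread extraction: if the equation X = Y between PGA-programs is derivable from the axioms PGA1–PGA8, then the extracted threads |X| and |Y| are equal. -/

import Mathlib

/-- Primitive instructions over a set `A` of basic instructions:
basic instructions `a`, positive tests `+a`, negative tests `-a`,
jump instructions `#k` and the termination instruction `!`. -/
inductive PrimInstr (A : Type) : Type where
  | basic (a : A)
  | pos (a : A)
  | neg (a : A)
  | jump (k : Nat)
  | halt
deriving DecidableEq

/-- PGA-programs over `A`: primitive instructions, concatenation `X;Y`
and repetition `X^ω`. -/
inductive PGA (A : Type) : Type where
  | prim (u : PrimInstr A)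
  | seq (X Y : PGA A)
  | rep (X : PGA A)
deriving DecidableEq

/-- `X.pow n` is the power `X^n` for `n ≥ 1`: `X^1 = X` and `X^(n+1) = X ; X^n`.
(The value at `0` is irrelevant and set to `X`; all statements only use `n ≥ 1`.) -/
def PGA.pow {A : Type} (X : PGA A) : Nat → PGA A
  | 0 => X
  | 1 => X
  | n+2 => X.seq (X.pow (n+1))

/-- A SPI: a nonempty finite (list) or infinite (function) sequence of primitive
instructions.  (Nonemptiness always holds for denotations of PGA-programs.) -/
abbrev SPI (A : Type) : Type := List (PrimInstr A) ⊕ (ℕ → PrimInstr A)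

/-- Concatenation of SPIs; if the first one is infinite, it is the result. -/
def SPI.seqc {A : Type} : SPI A → SPI A → SPI A
  | .inl l, .inl l' => .inl (l ++ l')
  | .inl l, .inr s => .inr fun n => if h : n < l.length then l.get ⟨n, h⟩ else s (n - l.length)
  | .inr s, _ => .inr s

/-- Infinite repetition of a SPI; an infinite SPI is its own repetition.
(The `getD`-default is never relevant: SPIs of PGA-programs are nonempty.) -/
def SPI.omega {A : Type} : SPI A → SPI A
  | .inl l => .inr fun n => l.getD (n % l.length) .halt
  | .inr s => .inr s

/-- The SPI denoted by a PGA-program. -/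
def PGA.spi {A : Type} : PGA A → SPI A
  | .prim u => .inl [u]
  | .seq X Y => X.spi.seqc Y.spi
  | .rep X => X.spi.omega

/-- The instruction of a SPI at a (0-based) position, if any. -/
def SPI.at? {A : Type} : SPI A → ℕ → Option (PrimInstr A)
  | .inl l, n => l[n]?
  | .inr s, n => some (s n)

/-- The polynomial functor `X ↦ {S} ⊕ {D} ⊕ A × X × X` whose final coalgebra
is the type of threads. -/
def ThreadF (A : Type) : PFunctor.{0} :=
  ⟨Unit ⊕ Unit ⊕ A, fun s => match s with
    | .inl _ => Empty
    | .inr (.inl _) => Empty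
    | .inr (.inr _) => Bool⟩

/-- Threads over `A`: the final coalgebra (coinductive type) generated by
termination `S`, deadlock `D` and postconditional composition. -/
def ThreadT (A : Type) : Type := PFunctor.M (ThreadF A)

/-- The terminating thread `S`. -/
def ThreadT.S {A : Type} : ThreadT A := PFunctor.M.mk ⟨Sum.inl (), Empty.elim⟩

/-- The deadlocking (inactive) thread `D`. -/
def ThreadT.D {A : Type} : ThreadT A := PFunctor.M.mk ⟨Sum.inr (Sum.inl ()), Empty.elim⟩

/-- Postconditional composition `P ⊴ a ⊵ Q` (continue as `P` on reply `true`
to `a`, as `Q` on reply `false`).  Action prefix `a ∘ P` is `P ⊴ a ⊵ P`. -/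
def ThreadT.post {A : Type} (a : A) (P Q : ThreadT A) : ThreadT A :=
  PFunctor.M.mk ⟨Sum.inr (Sum.inr a), fun b => match b with | true => P | false => Q⟩

/-- The size of a proper jump instruction (`#m` with `m ≥ 1`), if any. -/
def jumpSize {A : Type} : Option (PrimInstr A) → Option ℕ
  | some (.jump (m+1)) => some (m+1)
  | _ => none

/-- Following the chain of (proper) jumps of `σ` starting at position `j`. -/
def jchain {A : Type} (σ : ℕ → Option (PrimInstr A)) (j : ℕ) : ℕ → ℕ
  | 0 => j
  | k+1 =>
    match jumpSize (σ (jchain σ j k)) with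
    | some m => jchain σ j k + m
    | none => jchain σ j k

open Classical in
/-- One step of thread extraction at position `j` of the instruction sequence `σ`:
first resolve the chain of jumps from `j` (an infinite chain of jumps yields
deadlock `D`, as does jumping outside of the sequence or reaching `#0`), then read
off the instruction: `!` gives `S`, a basic instruction `a` gives action prefix
with both continuations at the next position, a positive (negative) test gives
postconditional composition continuing at the next position upon `true` (`false`)
and at the position thereafter upon `false` (`true`). -/
noncomputable def xstep {A : Type} (σ : ℕ → Option (PrimInstr A)) (j : ℕ) :
    (ThreadF A).Obj ℕ :=
  haveI : DecidablePred fun k => jumpSize (σ (jchain σ j k)) = none := fun _ => inferInstance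
  if h : ∃ k, jumpSize (σ (jchain σ j k)) = none then
    let j' := jchain σ j (Nat.find h)
    match σ j' with
    | some .halt => ⟨Sum.inl (), Empty.elim⟩
    | some (.basic a) => ⟨Sum.inr (Sum.inr a), fun _ => j' + 1⟩
    | some (.pos a) => ⟨Sum.inr (Sum.inr a), fun b => match b with | true => j' + 1 | false => j' + 2⟩
    | some (.neg a) => ⟨Sum.inr (Sum.inr a), fun b => match b with | true => j' + 2 | false => j' + 1⟩
    | _ => ⟨Sum.inr (Sum.inl ()), Empty.elim⟩
  else ⟨Sum.inr (Sum.inl ()), Empty.elim⟩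

/-- Thread extraction from an instruction-lookup function, starting at
(0-based) position `j₀`. -/
noncomputable def extractFrom {A : Type} (σ : ℕ → Option (PrimInstr A)) (j₀ : ℕ) : ThreadT A :=
  PFunctor.M.corec (xstep σ) j₀

/-- Thread extraction `|X|` on PGA-programs: extraction along the SPI denoted
by `X`, starting at its first instruction.  This realizes exactly the defining
equations of thread extraction (Table 2 of the paper). -/
noncomputable def PGA.thread {A : Type} (X : PGA A) : ThreadT A :=
  extractFrom X.spi.at? 0

/-- `catP [u_1, …, u_n] X` is the program `u_1 ; … ; u_n ; X`. -/
def catP {A : Type} : List (PrimInstr A) → PGA A → PGA A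
  | [], X => X
  | u :: l, X => (PGA.prim u).seq (catP l X)

/-- `fromL u [v_1, …, v_n]` is the repetition-free program `u ; v_1 ; … ; v_n`. -/
def fromL {A : Type} : PrimInstr A → List (PrimInstr A) → PGA A
  | u, [] => .prim u
  | u, v :: l => (PGA.prim u).seq (fromL v l)

/-- `progYZw [u_1,…,u_n] v [w_1,…,w_m]` is the first canonical form
`u_1 ; … ; u_n ; (v ; w_1 ; … ; w_m)^ω` (just `(v ; w_1 ; … ; w_m)^ω` if `n = 0`). -/
def progYZw {A : Type} (l₁ : List (PrimInstr A)) (v : PrimInstr A)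
    (l₂ : List (PrimInstr A)) : PGA A :=
  catP l₁ (PGA.rep (fromL v l₂))

/-- Equational-logic derivability from the axioms PGA1-PGA8 of program algebra
(structural congruence).  In PGA5-PGA8, `u_i`, `v_j` range over primitive
instructions and `k`, `n`, `m` over natural numbers. -/
inductive DerivSC {A : Type} : PGA A → PGA A → Prop
  | refl (X : PGA A) : DerivSC X X
  | symm {X Y : PGA A} : DerivSC X Y → DerivSC Y X
  | trans {X Y Z : PGA A} : DerivSC X Y → DerivSC Y Z → DerivSC X Z
  | seq_congr {X X' Y Y' : PGA A} : DerivSC X X' → DerivSC Y Y' → DerivSC (X.seq Y) (X'.seq Y')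
  | rep_congr {X Y : PGA A} : DerivSC X Y → DerivSC X.rep Y.rep
  | pga1 (X Y Z : PGA A) : DerivSC ((X.seq Y).seq Z) (X.seq (Y.seq Z))
  | pga2 (X : PGA A) (n : ℕ) (hn : 1 ≤ n) : DerivSC ((X.pow n).rep) X.rep
  | pga3 (X Y : PGA A) : DerivSC (X.rep.seq Y) X.rep
  | pga4 (X Y : PGA A) : DerivSC ((X.seq Y).rep) (X.seq ((Y.seq X).rep))
  | pga5 (l : List (PrimInstr A)) :
      DerivSC (catP (.jump (l.length + 1) :: l) (.prim (.jump 0)))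
              (catP (.jump 0 :: l) (.prim (.jump 0)))
  | pga6 (l : List (PrimInstr A)) (m : ℕ) :
      DerivSC (catP (.jump (l.length + 1) :: l) (.prim (.jump m)))
              (catP (.jump (l.length + m + 1) :: l) (.prim (.jump m)))
  | pga7 (k : ℕ) (l : List (PrimInstr A)) :
      DerivSC (PGA.rep (fromL (.jump (k + l.length + 1)) l))
              (PGA.rep (fromL (.jump k) l))
  | pga8 (l₁ : List (PrimInstr A)) (v : PrimInstr A) (l₂ : List (PrimInstr A)) (k : ℕ) :
      DerivSC ((PGA.prim (.jump (l₁.length + l₂.length + k + 2))).seq (progYZw l₁ v l₂))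
              ((PGA.prim (.jump (l₁.length + k + 1))).seq (progYZw l₁ v l₂))

section helpers
variable {A : Type}

noncomputable def outAt (σ : ℕ → Option (PrimInstr A)) (q : ℕ) : ThreadT A :=
  match σ q with
  | some .halt => ThreadT.S
  | some (.basic a) => ThreadT.post a (extractFrom σ (q+1)) (extractFrom σ (q+1))
  | some (.pos a) => ThreadT.post a (extractFrom σ (q+1)) (extractFrom σ (q+2))
  | some (.neg a) => ThreadT.post a (extractFrom σ (q+2)) (extractFrom σ (q+1))
  | _ => ThreadT.D

theorem extractFrom_unfold (σ : ℕ → Option (PrimInstr A)) (j : ℕ) :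
    extractFrom σ j = PFunctor.M.mk ((ThreadF A).map (extractFrom σ) (xstep σ j)) := by
  have h := PFunctor.M.dest_corec (xstep σ) j
  have h2 := PFunctor.M.mk_dest (PFunctor.M.corec (xstep σ) j)
  rw [h] at h2
  exact h2.symm

theorem jchain_stable (σ : ℕ → Option (PrimInstr A)) (j k : ℕ)
    (h : jumpSize (σ (jchain σ j k)) = none) (d : ℕ) :
    jchain σ j (k + d) = jchain σ j k := by
  induction d with
  | zero => rfl
  | succ d ih =>
    rw [← add_assoc, jchain, ih, h]

/-- The result of one step at a resolved position. -/
def xout (σ : ℕ → Option (PrimInstr A)) (j' : ℕ) : (ThreadF A).Obj ℕ :=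
  match σ j' with
  | some .halt => ⟨Sum.inl (), Empty.elim⟩
  | some (.basic a) => ⟨Sum.inr (Sum.inr a), fun _ => j' + 1⟩
  | some (.pos a) => ⟨Sum.inr (Sum.inr a), fun b => match b with | true => j' + 1 | false => j' + 2⟩
  | some (.neg a) => ⟨Sum.inr (Sum.inr a), fun b => match b with | true => j' + 2 | false => j' + 1⟩
  | _ => ⟨Sum.inr (Sum.inl ()), Empty.elim⟩

theorem mk_congr (x y : (ThreadF A).Obj (ThreadT A)) (h : x = y) :
    (PFunctor.M.mk x : ThreadT A) = PFunctor.M.mk y := by rw [h]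

theorem extract_of_xstep (σ : ℕ → Option (PrimInstr A)) (j : ℕ) (z : (ThreadF A).Obj ℕ)
    (h : xstep σ j = z) :
    extractFrom σ j = PFunctor.M.mk ((ThreadF A).map (extractFrom σ) z) := by
  subst h; exact extractFrom_unfold σ j

theorem extract_none (σ : ℕ → Option (PrimInstr A)) (j : ℕ)
    (h : ¬ ∃ k, jumpSize (σ (jchain σ j k)) = none) : extractFrom σ j = ThreadT.D := by
  refine (extract_of_xstep σ j _ (dif_neg h)).trans ?_
  exact mk_congr _ _ (Sigma.ext rfl (heq_of_eq (funext fun x => x.elim)))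

theorem mk_xout (σ : ℕ → Option (PrimInstr A)) (q : ℕ) :
    PFunctor.M.mk ((ThreadF A).map (extractFrom σ) (xout σ q)) = outAt σ q := by
  unfold outAt xout
  rcases σ q with _ | u
  · exact mk_congr _ _ (Sigma.ext rfl (heq_of_eq (funext fun x => x.elim)))
  · cases u <;>
      refine mk_congr _ _ (Sigma.ext rfl (heq_of_eq (funext fun x => ?_))) <;>
      first | exact x.elim | (cases x <;> rfl)

theorem extract_some (σ : ℕ → Option (PrimInstr A)) (j k : ℕ)
    (h : jumpSize (σ (jchain σ j k)) = none) : extractFrom σ j = outAt σ (jchain σ j k) := by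
  have hex : ∃ k, jumpSize (σ (jchain σ j k)) = none := ⟨k, h⟩
  have key : ∀ k0, k0 ≤ k → jumpSize (σ (jchain σ j k0)) = none →
      jchain σ j k0 = jchain σ j k := by
    intro k0 hk h0
    obtain ⟨d, rfl⟩ := Nat.exists_eq_add_of_le hk
    exact (jchain_stable σ j k0 h0 d).symm
  refine (extract_of_xstep σ j (xout σ (jchain σ j k)) ?_).trans (mk_xout σ _)
  refine (dif_pos hex).trans ?_
  change xout σ _ = _
  exact congrArg (xout σ) (key _ (Nat.find_min' _ h) (Nat.find_spec hex))

theorem jchain_succ' (σ : ℕ → Option (PrimInstr A)) (j m : ℕ)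
    (h : σ j = some (.jump (m+1))) (k : ℕ) :
    jchain σ j (k+1) = jchain σ (j+(m+1)) k := by
  induction k with
  | zero => simp [jchain, h, jumpSize]
  | succ k ih => rw [jchain, ih]; rfl

theorem extract_base (σ : ℕ → Option (PrimInstr A)) (j : ℕ)
    (h : jumpSize (σ j) = none) : extractFrom σ j = outAt σ j :=
  extract_some σ j 0 h

theorem extract_jump (σ : ℕ → Option (PrimInstr A)) (j m : ℕ)
    (h : σ j = some (.jump (m+1))) : extractFrom σ j = extractFrom σ (j+(m+1)) := by
  by_cases hx : ∃ k, jumpSize (σ (jchain σ (j+(m+1)) k)) = none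
  · obtain ⟨k, hk⟩ := hx
    rw [extract_some σ _ k hk, ← jchain_succ' σ j m h]
    apply extract_some
    rw [jchain_succ' σ j m h]; exact hk
  · rw [extract_none σ _ hx]
    apply extract_none
    rintro ⟨k, hk⟩
    cases k with
    | zero => simp [jchain, h, jumpSize] at hk
    | succ k => exact hx ⟨k, by rw [← jchain_succ' σ j m h]; exact hk⟩

theorem extract_jump0 (σ : ℕ → Option (PrimInstr A)) (j : ℕ)
    (h : σ j = some (.jump 0)) : extractFrom σ j = ThreadT.D := by
  rw [extract_base σ j (by simp [h, jumpSize]), outAt, h]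

/-- The jump chain from a position terminates. -/
inductive Term (σ : ℕ → Option (PrimInstr A)) : ℕ → Prop
  | base (j) : jumpSize (σ j) = none → Term σ j
  | step (j m) : σ j = some (.jump (m+1)) → Term σ (j+(m+1)) → Term σ j

theorem jumpSize_cases (o : Option (PrimInstr A)) :
    jumpSize o = none ∨ ∃ m, o = some (.jump (m+1)) := by
  rcases o with _ | u
  · simp [jumpSize]
  · cases u with
    | jump k => cases k <;> simp [jumpSize]
    | _ => simp [jumpSize]

theorem term_of_chain (σ : ℕ → Option (PrimInstr A)) (k : ℕ) : ∀ j,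
    jumpSize (σ (jchain σ j k)) = none → Term σ j := by
  induction k with
  | zero => intro j h; exact .base j h
  | succ k ih =>
    intro j h
    rcases jumpSize_cases (σ j) with h0 | ⟨m, hm⟩
    · exact .base j h0
    · exact .step j m hm (ih _ (by rw [← jchain_succ' σ j m hm]; exact h))

theorem extract_notTerm (σ : ℕ → Option (PrimInstr A)) (j : ℕ) (h : ¬ Term σ j) :
    extractFrom σ j = ThreadT.D :=
  extract_none σ j fun ⟨k, hk⟩ => h (term_of_chain σ k j hk)

/-- One-step matching of threads. -/
inductive Mat (P : ThreadT A → ThreadT A → Prop) : ThreadT A → ThreadT A → Prop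
  | D : Mat P ThreadT.D ThreadT.D
  | S : Mat P ThreadT.S ThreadT.S
  | post (a) (x1 x2 y1 y2) : P x1 y1 → P x2 y2 → Mat P (ThreadT.post a x1 x2) (ThreadT.post a y1 y2)

theorem thread_bisim (P : ThreadT A → ThreadT A → Prop) (h : ∀ x y, P x y → Mat P x y)
    (x y : ThreadT A) (hxy : P x y) : x = y := by
  refine PFunctor.M.bisim P ?_ x y hxy
  intro x y hxy
  cases h x y hxy with
  | D => exact ⟨_, _, _, PFunctor.M.dest_mk _, PFunctor.M.dest_mk _, fun i => i.elim⟩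
  | S => exact ⟨_, _, _, PFunctor.M.dest_mk _, PFunctor.M.dest_mk _, fun i => i.elim⟩
  | post a x1 x2 y1 y2 h1 h2 =>
    refine ⟨_, _, _, PFunctor.M.dest_mk _, PFunctor.M.dest_mk _, fun i => ?_⟩
    cases i
    · exact h2
    · exact h1

theorem mat_out (P : ThreadT A → ThreadT A → Prop) (σ τ : ℕ → Option (PrimInstr A)) (j j' : ℕ)
    (hn : jumpSize (σ j) = none) (he : σ j = τ j')
    (h1 : P (extractFrom σ (j+1)) (extractFrom τ (j'+1)))
    (h2 : P (extractFrom σ (j+2)) (extractFrom τ (j'+2))) :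
    Mat P (extractFrom σ j) (extractFrom τ j') := by
  rw [extract_base σ j hn, extract_base τ j' (he ▸ hn), outAt, outAt, ← he]
  rcases σ j with _ | u
  · exact .D
  · cases u
    · exact .post _ _ _ _ _ h1 h1
    · exact .post _ _ _ _ _ h1 h2
    · exact .post _ _ _ _ _ h2 h1
    · exact .D
    · exact .S

theorem term_tail (σ τ : ℕ → Option (PrimInstr A)) (x : ℕ) (h : Term σ x) :
    ∀ y, (∀ i, σ (x+i) = τ (y+i)) → Term τ y := by
  induction h with
  | base j h => intro y hy; exact .base _ (by have := hy 0; simp only [add_zero] at this; rw [← this]; exact h)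
  | step j m h _ ih =>
    intro y hy
    exact .step y m (by have := hy 0; simp only [add_zero] at this; rw [← this]; exact h) (ih _ fun i => by
      rw [add_assoc j, add_assoc y]; exact hy _)

theorem extract_tail (σ τ : ℕ → Option (PrimInstr A)) (x y : ℕ)
    (hxy : ∀ i, σ (x+i) = τ (y+i)) : extractFrom σ x = extractFrom τ y := by
  refine thread_bisim (fun p q => ∃ x y, (∀ i, σ (x+i) = τ (y+i)) ∧ p = extractFrom σ x ∧
    q = extractFrom τ y) ?_ _ _ ⟨x, y, hxy, rfl, rfl⟩
  rintro _ _ ⟨x, y, hxy, rfl, rfl⟩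
  by_cases ht : Term σ x
  · induction ht generalizing y with
    | base j h =>
      refine mat_out _ σ τ _ _ h (hxy 0) ⟨_, _, ?_, rfl, rfl⟩ ⟨_, _, ?_, rfl, rfl⟩ <;>
      · intro i; rw [add_assoc, add_assoc]; exact hxy _
    | step j m h _ ih =>
      rw [extract_jump σ j m h, extract_jump τ y m (by rw [← h]; exact (hxy 0).symm)]
      exact ih _ fun i => by rw [add_assoc j, add_assoc y]; exact hxy _
  · rw [extract_notTerm σ x ht, extract_notTerm τ y
      (fun h => ht (term_tail τ σ y h x fun i => (hxy i).symm))]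
    exact .D

/-- Local justification of a change of instruction at position `j`. -/
inductive Loc (σ τ : ℕ → Option (PrimInstr A)) (j : ℕ) : Prop
  | eq : σ j = τ j → Loc σ τ j
  | c5 (a : ℕ) : σ j = some (.jump (a+1)) → τ j = some (.jump 0) →
      σ (j+(a+1)) = some (.jump 0) → τ (j+(a+1)) = some (.jump 0) → Loc σ τ j
  | c6 (n m : ℕ) : σ j = some (.jump (n+1)) → τ j = some (.jump (n+1+m+1)) →
      σ (j+(n+1)) = some (.jump (m+1)) → τ (j+(n+1)) = some (.jump (m+1)) → Loc σ τ j
  | c7 (p : ℕ) : σ j = some (.jump (p+1)) → τ j = some (.jump 0) →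
      (∀ i, σ (j+(p+1)+i) = σ (j+i)) → (∀ i, σ (j+i) ≠ none) → Loc σ τ j
  | c8 (a p : ℕ) : σ j = some (.jump (a+p+1)) → τ j = some (.jump (a+1)) →
      (∀ i, σ (j+(a+p+1)+i) = σ (j+(a+1)+i)) → (∀ i, τ (j+(a+p+1)+i) = τ (j+(a+1)+i)) →
      (∀ i, σ (j+i) ≠ none) → (∀ i, τ (j+i) ≠ none) → Loc σ τ j

theorem c7_notTerm (σ : ℕ → Option (PrimInstr A)) (p j : ℕ) (ht : Term σ j)
    (h : σ j = some (.jump (p+1))) (hp : ∀ i, σ (j+(p+1)+i) = σ (j+i)) : False := by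
  induction ht with
  | base j hb => simp [h, jumpSize] at hb
  | step j m hm _ ih =>
    rw [h] at hm
    obtain rfl : p = m := by simpa using hm
    refine ih ?_ ?_
    · rw [← h]; exact hp 0
    · intro i
      have := hp (p+1+i)
      rw [add_assoc (j+(p+1)) (p+1) i, add_assoc j (p+1) i]
      exact this

theorem loc_sound (σ τ : ℕ → Option (PrimInstr A)) (h : ∀ j, Loc σ τ j) (j : ℕ) :
    extractFrom σ j = extractFrom τ j := by
  refine thread_bisim (fun p q => ∃ j, p = extractFrom σ j ∧ q = extractFrom τ j) ?_ _ _
    ⟨j, rfl, rfl⟩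
  rintro _ _ ⟨j, rfl, rfl⟩
  by_cases hs : Term σ j
  · induction hs with
    | base j hn =>
      cases h j with
      | eq he => exact mat_out _ σ τ j j hn he ⟨_, rfl, rfl⟩ ⟨_, rfl, rfl⟩
      | c5 a h1 => simp [h1, jumpSize] at hn
      | c6 a b h1 => simp [h1, jumpSize] at hn
      | c7 a h1 => simp [h1, jumpSize] at hn
      | c8 a b h1 => simp [h1, jumpSize] at hn
    | step j m hm ht ih =>
      cases h j with
      | eq he =>
        rw [extract_jump σ j m hm, extract_jump τ j m (he ▸ hm)]; exact ih
      | c5 a h1 h2 h3 h4 =>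
        rw [extract_jump σ j a h1, extract_jump0 σ _ h3, extract_jump0 τ j h2]; exact .D
      | c6 n k h1 h2 h3 h4 =>
        obtain rfl : n = m := by simpa [h1] using hm
        rw [extract_jump σ j n h1, extract_jump τ j _ h2]
        rw [extract_jump τ _ _ h4] at ih
        rw [show j + (n+1+k+1) = j + (n+1) + (k+1) by ring]
        exact ih
      | c7 p h1 h2 h3 h4 =>
        exact (c7_notTerm σ p j (.step j m hm ht) h1 h3).elim
      | c8 a p h1 h2 h3 h4 _ _ =>
        obtain rfl : a + p = m := by simpa [h1] using hm
        rw [extract_jump σ j _ h1, extract_jump τ j _ h2, ← extract_tail τ τ _ _ h4]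
        exact ih
  · by_cases hT : Term τ j
    · induction hT with
      | base j hn =>
        cases h j with
        | eq he => exact mat_out _ σ τ j j (he ▸ hn) he ⟨_, rfl, rfl⟩ ⟨_, rfl, rfl⟩
        | c5 a h1 h2 => rw [extract_notTerm σ j hs, extract_jump0 τ j h2]; exact .D
        | c7 a h1 h2 => rw [extract_notTerm σ j hs, extract_jump0 τ j h2]; exact .D
        | c6 a b h1 h2 => simp [h2, jumpSize] at hn
        | c8 a b h1 h2 => simp [h2, jumpSize] at hn
      | step j m hm ht ih =>
        cases h j with
        | eq he =>
          rw [extract_jump σ j m (he.trans hm), extract_jump τ j m hm]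
          exact ih fun h => hs (.step j m (he.trans hm) h)
        | c5 a h1 h2 => simp [h2] at hm
        | c7 a h1 h2 => simp [h2] at hm
        | c6 n k h1 h2 h3 h4 =>
          obtain rfl : n+1+k = m := by simpa [h2] using hm
          rw [extract_jump σ j n h1, extract_jump σ _ _ h3, extract_jump τ j _ h2]
          have e : j + (n+1+k+1) = j + (n+1) + (k+1) := by ring
          rw [e] at ih ⊢
          exact ih fun h => hs (.step j n h1 (.step _ k h3 h))
        | c8 a p h1 h2 h3 h4 _ _ =>
          obtain rfl : a = m := by simpa [h2] using hm
          rw [extract_jump σ j _ h1, extract_jump τ j _ h2, extract_tail σ σ _ _ h3]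
          exact ih fun h => hs (.step j _ h1 (term_tail σ σ _ h _ fun i => (h3 i).symm))
    · rw [extract_notTerm σ j hs, extract_notTerm τ j hT]; exact .D

theorem Loc.transfer {σ τ σ' τ' : ℕ → Option (PrimInstr A)} {d j : ℕ}
    (hσ : ∀ i x, σ i = some x → σ' (d+i) = some x)
    (hτ : ∀ i x, τ i = some x → τ' (d+i) = some x)
    (hj : σ j ≠ none) (h : Loc σ τ j) : Loc σ' τ' (d+j) := by
  have gen : ∀ (σ σ' : ℕ → Option (PrimInstr A)), (∀ i x, σ i = some x → σ' (d+i) = some x) →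
      (∀ i, σ (j+i) ≠ none) → ∀ i, σ' (d+j+i) = σ (j+i) := by
    intro σ σ' h1 h2 i
    obtain ⟨x, hx⟩ := Option.ne_none_iff_exists'.1 (h2 i)
    rw [hx, add_assoc]; exact h1 _ _ hx
  cases h with
  | eq he =>
    obtain ⟨x, hx⟩ := Option.ne_none_iff_exists'.1 hj
    exact .eq (by rw [hσ _ _ hx, hτ _ _ (he ▸ hx)])
  | c5 a h1 h2 h3 h4 =>
    exact .c5 a (hσ _ _ h1) (hτ _ _ h2) (by rw [add_assoc]; exact hσ _ _ h3)
      (by rw [add_assoc]; exact hτ _ _ h4)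
  | c6 a b h1 h2 h3 h4 =>
    exact .c6 a b (hσ _ _ h1) (hτ _ _ h2) (by rw [add_assoc]; exact hσ _ _ h3)
      (by rw [add_assoc]; exact hτ _ _ h4)
  | c7 p h1 h2 h3 h4 =>
    have g := gen σ σ' hσ h4
    refine .c7 p (hσ _ _ h1) (hτ _ _ h2) (fun i => ?_) (fun i => by rw [g]; exact h4 i)
    rw [add_assoc, g, g, ← add_assoc, h3]
  | c8 a p h1 h2 h3 h4 h5 h6 =>
    have g := gen σ σ' hσ h5
    have g' := gen τ τ' hτ h6
    refine .c8 a p (hσ _ _ h1) (hτ _ _ h2) (fun i => ?_) (fun i => ?_)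
      (fun i => by rw [g]; exact h5 i) (fun i => by rw [g']; exact h6 i)
    · rw [add_assoc, g, add_assoc (d+j), g, ← add_assoc, h3, add_assoc]
    · rw [add_assoc, g', add_assoc (d+j), g', ← add_assoc, h4, add_assoc]

theorem at_seqc (l : List (PrimInstr A)) (t : SPI A) (n : ℕ) :
    (SPI.seqc (.inl l) t).at? n = if n < l.length then l[n]? else t.at? (n - l.length) := by
  rcases t with l' | s
  · simp only [SPI.seqc, SPI.at?]
    rw [List.getElem?_append]
  · simp only [SPI.seqc, SPI.at?]
    split_ifs with h
    · simp [h]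
    · rfl

theorem at_omega (l : List (PrimInstr A)) (h : 0 < l.length) (n : ℕ) :
    (SPI.omega (.inl l)).at? n = l[n % l.length]? := by
  have := Nat.mod_lt n h
  simp [SPI.omega, SPI.at?, this]

/-- Same shape. -/
def Shape : SPI A → SPI A → Prop
  | .inl l, .inl l' => l.length = l'.length
  | .inr _, .inr _ => True
  | _, _ => False

def El (s t : SPI A) : Prop := Shape s t ∧ ∀ j, Loc s.at? t.at? j

theorem El.left (r : SPI A) {s t : SPI A} (h : El s t) : El (r.seqc s) (r.seqc t) := by
  rcases r with r | r
  swap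
  · exact ⟨trivial, fun j => .eq rfl⟩
  obtain ⟨h1, h2⟩ := h
  refine ⟨?_, fun j => ?_⟩
  · rcases s with s | s <;> rcases t with t | t <;> simp_all [Shape, SPI.seqc]
  · by_cases hj : j < r.length
    · refine .eq ?_
      rw [at_seqc, at_seqc, if_pos hj, if_pos hj]
    · obtain ⟨i, rfl⟩ := Nat.exists_eq_add_of_le (not_lt.1 hj)
      by_cases hn : s.at? i = none
      · refine .eq ?_
        rw [at_seqc, at_seqc, if_neg hj, if_neg hj]
        simp only [Nat.add_sub_cancel_left]
        rcases s with s | s <;> rcases t with t | t <;> simp_all [Shape, SPI.at?]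
      · refine Loc.transfer ?_ ?_ hn (h2 i) <;>
        · intro i x hx
          rw [at_seqc, if_neg (by omega), Nat.add_sub_cancel_left, hx]

theorem El.right (r : SPI A) {s t : SPI A} (h : El s t) : El (s.seqc r) (t.seqc r) := by
  rcases s with s | s <;> rcases t with t | t
  · obtain ⟨h1, h2⟩ := h
    have h1 : s.length = t.length := h1
    refine ⟨?_, fun j => ?_⟩
    · rcases r with r | r <;> simp_all [Shape, SPI.seqc]
    · by_cases hj : j < s.length
      · have := Loc.transfer (d := 0) (σ' := (SPI.seqc (.inl s) r).at?)
          (τ' := (SPI.seqc (.inl t) r).at?) ?_ ?_ ?_ (h2 j)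
        · simpa using this
        · intro i x hx
          have hi : i < s.length := by
            by_contra hc
            simp [SPI.at?, not_lt.1 hc] at hx
          rw [zero_add, at_seqc, if_pos hi]; exact hx
        · intro i x hx
          have hi : i < t.length := by
            by_contra hc
            simp [SPI.at?, not_lt.1 hc] at hx
          rw [zero_add, at_seqc, if_pos hi]; exact hx
        · simp [SPI.at?, hj]
      · refine .eq ?_
        rw [at_seqc, at_seqc, if_neg hj, if_neg (h1 ▸ hj), h1]
  · exact h.1.elim
  · exact h.1.elim
  · exact h

theorem El.omega {s t : SPI A} (h : El s t) : El s.omega t.omega := by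
  rcases s with s | s <;> rcases t with t | t
  · obtain ⟨h1, h2⟩ := h
    have h1 : s.length = t.length := h1
    refine ⟨trivial, fun j => ?_⟩
    by_cases h0 : s.length = 0
    · obtain rfl := List.length_eq_zero_iff.1 h0
      obtain rfl := List.length_eq_zero_iff.1 (h1 ▸ h0)
      exact .eq rfl
    · have hp : 0 < s.length := Nat.pos_of_ne_zero h0
      have key : ∀ (l : List (PrimInstr A)) (q : ℕ), 0 < l.length → ∀ i x,
          SPI.at? (.inl l) i = some x → (SPI.omega (.inl l)).at? (l.length * q + i) = some x := by
        intro l q hl i x hx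
        have hi : i < l.length := by
          by_contra hc
          simp [SPI.at?, not_lt.1 hc] at hx
        rw [at_omega l hl, Nat.mul_add_mod, Nat.mod_eq_of_lt hi]; exact hx
      rw [← Nat.div_add_mod j s.length]
      refine Loc.transfer (key s _ hp) ?_ ?_ (h2 (j % s.length))
      · rw [h1]; exact key t _ (h1 ▸ hp)
      · have := Nat.mod_lt j hp
        simp [SPI.at?, this]
  · exact h.1.elim
  · exact h.1.elim
  · exact h

abbrev Eqv (s t : SPI A) : Prop := Relation.EqvGen El s t

theorem Eqv.map (f : SPI A → SPI A) (hf : ∀ s t, El s t → El (f s) (f t)) {s t : SPI A}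
    (h : Eqv s t) : Eqv (f s) (f t) := by
  induction h with
  | rel _ _ h => exact .rel _ _ (hf _ _ h)
  | refl _ => exact .refl _
  | symm _ _ _ ih => exact .symm _ _ ih
  | trans _ _ _ _ _ ih1 ih2 => exact .trans _ _ _ ih1 ih2

theorem Eqv.sound {s t : SPI A} (h : Eqv s t) : extractFrom s.at? 0 = extractFrom t.at? 0 := by
  induction h with
  | rel _ _ h => exact loc_sound _ _ h.2 0
  | refl _ => rfl
  | symm _ _ _ ih => exact ih.symm
  | trans _ _ _ _ _ ih1 ih2 => exact ih1.trans ih2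

theorem Eqv.of_eq {s t : SPI A} (h : s = t) : Eqv s t := h ▸ .refl _

theorem inr_ext {s t : ℕ → PrimInstr A}
    (h : ∀ n, SPI.at? (.inr s) n = SPI.at? (.inr t) n) : (.inr s : SPI A) = .inr t := by
  congr 1
  funext n
  simpa [SPI.at?] using h n

theorem seqc_assoc (r s t : SPI A) : (r.seqc s).seqc t = r.seqc (s.seqc t) := by
  rcases r with r | r
  swap
  · rfl
  rcases s with s | s
  swap
  · rfl
  rcases t with t | t
  · simp [SPI.seqc]
  · refine inr_ext fun n => ?_
    change (SPI.seqc (.inl (r ++ s)) (.inr t)).at? n =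
      (SPI.seqc (.inl r) (SPI.seqc (.inl s) (.inr t))).at? n
    rw [at_seqc, at_seqc, at_seqc, List.length_append, List.getElem?_append]
    split_ifs <;> first | rfl | omega | (congr 1; omega)

theorem nil_seqc (t : SPI A) : SPI.seqc (.inl []) t = t := by
  rcases t with t | t
  · rfl
  · exact inr_ext fun n => by simp [SPI.at?]

theorem catP_spi (l : List (PrimInstr A)) (X : PGA A) :
    (catP l X).spi = SPI.seqc (.inl l) X.spi := by
  induction l with
  | nil => exact (nil_seqc _).symm
  | cons u l ih =>
    rw [catP, PGA.spi, ih, PGA.spi, ← seqc_assoc]; rfl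

theorem fromL_spi (l : List (PrimInstr A)) (u : PrimInstr A) :
    (fromL u l).spi = .inl (u :: l) := by
  induction l generalizing u with
  | nil => rfl
  | cons v l ih => rw [fromL, PGA.spi, ih]; rfl

theorem pow_spi_inl (X : PGA A) (l : List (PrimInstr A)) (hX : X.spi = .inl l) (n : ℕ) :
    ∃ L, (X.pow (n+1)).spi = .inl L ∧ L.length = (n+1) * l.length ∧
      ∀ i, i < (n+1) * l.length → L[i]? = l[i % l.length]? := by
  induction n with
  | zero =>
    refine ⟨l, hX, by simp, fun i hi => ?_⟩
    rw [Nat.mod_eq_of_lt (by simpa using hi)]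
  | succ n ih =>
    obtain ⟨L, h1, h2, h3⟩ := ih
    refine ⟨l ++ L, ?_, ?_, ?_⟩
    · rw [PGA.pow, PGA.spi, hX, h1]; rfl
    · rw [List.length_append, h2]; ring
    · intro i hi
      rw [List.getElem?_append]
      split_ifs with hl
      · rw [Nat.mod_eq_of_lt hl]
      · rw [h3, ← Nat.mod_eq_sub_mod (not_lt.1 hl)]
        have : (n+1+1) * l.length = (n+1) * l.length + l.length := by ring
        omega

theorem pow_spi_inr (X : PGA A) (s : ℕ → PrimInstr A) (hX : X.spi = .inr s) (n : ℕ) :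
    (X.pow (n+1)).spi = .inr s := by
  cases n with
  | zero => exact hX
  | succ n => rw [PGA.pow, PGA.spi, hX]; rfl

theorem pow_omega (X : PGA A) (n : ℕ) : (X.pow (n+1)).spi.omega = X.spi.omega := by
  cases hX : X.spi with
  | inr s => rw [pow_spi_inr X s hX]
  | inl l =>
    obtain ⟨L, h1, h2, h3⟩ := pow_spi_inl X l hX n
    rw [h1]
    by_cases h0 : l.length = 0
    · obtain rfl := List.length_eq_zero_iff.1 h0
      obtain rfl : L = [] := List.length_eq_zero_iff.1 (by simpa using h2)
      rfl
    · have hp : 0 < l.length := Nat.pos_of_ne_zero h0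
      have hP : 0 < (n+1) * l.length := by positivity
      refine inr_ext fun i => ?_
      change (SPI.omega (.inl L)).at? i = (SPI.omega (.inl l)).at? i
      rw [at_omega L (h2 ▸ hP), at_omega l hp, h2, h3 _ (Nat.mod_lt _ hP)]
      rw [Nat.mod_mul_left_mod]

theorem omega_unfold (r s : SPI A) : (r.seqc s).omega = r.seqc (s.seqc r).omega := by
  rcases r with r | r
  swap
  · rfl
  rcases s with s | s
  swap
  · rfl
  by_cases h0 : (r ++ s).length = 0
  · have := List.length_eq_zero_iff.1 h0
    obtain ⟨rfl, rfl⟩ := List.append_eq_nil_iff.1 this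
    exact (nil_seqc _).symm
  · have hp : 0 < (r ++ s).length := Nat.pos_of_ne_zero h0
    have hp' : 0 < (s ++ r).length := by simp at hp ⊢; tauto
    refine inr_ext fun i => ?_
    change (SPI.omega (.inl (r ++ s))).at? i =
      (SPI.seqc (.inl r) (SPI.omega (.inl (s ++ r)))).at? i
    rw [at_omega _ hp, at_seqc]
    split_ifs with hi
    · rw [Nat.mod_eq_of_lt (by simp; omega), List.getElem?_append_left hi]
    · obtain ⟨k, rfl⟩ := Nat.exists_eq_add_of_le (not_lt.1 hi)
      rw [at_omega _ hp', Nat.add_sub_cancel_left]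
      simp only [List.length_append] at *
      rw [add_comm s.length]
      rw [← Nat.add_mod_mod]
      have hk := Nat.mod_lt k hp
      generalize k % (r.length + s.length) = q at *
      by_cases hq : q < s.length
      · rw [Nat.mod_eq_of_lt (by omega), List.getElem?_append_right (by omega),
          List.getElem?_append_left hq, Nat.add_sub_cancel_left]
      · rw [Nat.mod_eq_sub_mod (by omega), Nat.mod_eq_of_lt (by omega),
          List.getElem?_append_left (by omega), List.getElem?_append_right (by omega)]
        congr 1; omega

theorem deriv_eqv {X Y : PGA A} (h : DerivSC X Y) : Eqv X.spi Y.spi := by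
  induction h with
  | refl X => exact .refl _
  | symm _ ih => exact .symm _ _ ih
  | trans _ _ ih1 ih2 => exact .trans _ _ _ ih1 ih2
  | @seq_congr X X' Y Y' _ _ ih1 ih2 =>
    exact .trans _ _ _ (Eqv.map (fun s => s.seqc Y.spi) (fun _ _ h => h.right _) ih1)
      (Eqv.map (fun s => X'.spi.seqc s) (fun _ _ h => h.left _) ih2)
  | rep_congr _ ih => exact Eqv.map SPI.omega (fun _ _ h => h.omega) ih
  | pga1 X Y Z => exact .of_eq (seqc_assoc _ _ _)
  | pga2 X n hn =>
    obtain ⟨n, rfl⟩ := Nat.exists_eq_add_of_le' hn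
    exact .of_eq (pow_omega X n)
  | pga3 X Y =>
    refine .of_eq ?_
    simp only [PGA.spi]
    rcases X.spi with l | s <;> rfl
  | pga4 X Y => exact .of_eq (omega_unfold _ _)
  | pga5 l =>
    rw [catP_spi, catP_spi]
    refine .rel _ _ ⟨by simp [Shape, SPI.seqc, PGA.spi], fun j => ?_⟩
    rcases j with _ | j
    · refine .c5 l.length ?_ ?_ ?_ ?_ <;> simp [SPI.seqc, PGA.spi, SPI.at?]
    · exact .eq (by simp [SPI.seqc, PGA.spi, SPI.at?])
  | pga6 l m =>
    rcases m with _ | m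
    · exact .refl _
    rw [catP_spi, catP_spi]
    refine .rel _ _ ⟨by simp [Shape, SPI.seqc, PGA.spi], fun j => ?_⟩
    rcases j with _ | j
    · refine .c6 l.length m ?_ ?_ ?_ ?_ <;> simp [SPI.seqc, PGA.spi, SPI.at?]
      omega
    · exact .eq (by simp [SPI.seqc, PGA.spi, SPI.at?])
  | pga7 k l =>
    simp only [PGA.spi, fromL_spi]
    refine .rel _ _ ⟨trivial, fun j => ?_⟩
    have at' : ∀ (u : PrimInstr A) i, (SPI.omega (.inl (u :: l))).at? i =
        (u :: l)[i % (l.length+1)]? := fun u i => at_omega (u :: l) (by simp) i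
    have nn : ∀ (u : PrimInstr A) i, (SPI.omega (.inl (u :: l))).at? i ≠ none := by
      intro u i; simp [SPI.omega, SPI.at?]
    by_cases hj : j % (l.length + 1) = 0
    · rcases k with _ | k
      · refine .c7 l.length ?_ ?_ ?_ (fun i => nn _ _)
        · rw [at', hj]; simp
        · rw [at', hj]; simp
        · intro i; rw [at', at', add_right_comm j, Nat.add_mod_right]
      · refine .c8 k (l.length+1) ?_ ?_ ?_ ?_ (fun i => nn _ _) (fun i => nn _ _)
        · rw [at', hj]; simp; omega
        · rw [at', hj]; simp
        all_goals
          intro i; rw [at', at']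
          rw [show j + (k + (l.length+1) + 1) + i = j + (k+1) + i + (l.length+1) by ring,
            Nat.add_mod_right]
    · obtain ⟨q, hq⟩ := Nat.exists_eq_succ_of_ne_zero hj
      exact .eq (by rw [at', at', hq]; simp)
  | pga8 l₁ v l₂ k =>
    simp only [PGA.spi, progYZw, catP_spi, fromL_spi, ← seqc_assoc]
    have hsh : ∀ u : PrimInstr A, SPI.seqc (.inl [u]) (.inl l₁) = .inl (u :: l₁) := fun _ => rfl
    rw [hsh, hsh]
    refine .rel _ _ ⟨trivial, fun j => ?_⟩
    have at' : ∀ (u : PrimInstr A) i,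
        (SPI.seqc (.inl (u :: l₁)) (SPI.omega (.inl (v :: l₂)))).at? i =
        if i < l₁.length + 1 then (u :: l₁)[i]? else
          (v :: l₂)[(i - (l₁.length+1)) % (l₂.length+1)]? := by
      intro u i
      rw [at_seqc, at_omega (v :: l₂) (by simp)]; rfl
    have nn : ∀ (u : PrimInstr A) i,
        (SPI.seqc (.inl (u :: l₁)) (SPI.omega (.inl (v :: l₂)))).at? i ≠ none := by
      intro u i; simp [SPI.omega, SPI.at?, SPI.seqc]
    rcases j with _ | j
    · refine .c8 (l₁.length + k) (l₂.length+1) ?_ ?_ ?_ ?_ (fun i => nn _ _) (fun i => nn _ _)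
      · rw [at']; simp; omega
      · rw [at']; simp
      all_goals
        intro i; rw [at', at', if_neg (by omega), if_neg (by omega)]
        rw [show 0 + (l₁.length + k + (l₂.length + 1) + 1) + i - (l₁.length + 1) =
          (0 + (l₁.length + k + 1) + i - (l₁.length + 1)) + (l₂.length + 1) by omega,
          Nat.add_mod_right]
    · exact .eq (by rw [at', at']; simp)

end helpers

/-- Structural congruence is sound for thread extraction: provably equal
programs (from PGA1-PGA8) have equal extracted threads. -/
theorem structural_congruence_sound_for_threads (A : Type) (X Y : PGA A)
    (h : DerivSC X Y) : X.thread = Y.thread := by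
  exact (deriv_eqv h).sound
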